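/- Let $H$ be a real Hilbert space, let $\Gamma=[a,b]$ with $0<a\le b$ be a nonempty compact interval, let $\mu,\rho>0$, and let $A_1,A_2:H\rightrightarrows H$ be maximally monotone and paramonotone operators. Here a monotone operator $A$ is paramonotone if $u\in Ax$, $v\in Ay$ and $\langle x-y,u-v\rangle=0$ imply $v\in Ax$ and $u\in Ay$. For $\sigma>0$, an operator $A$ is $\sigma$-strongly monotone relative to a set $X$ if $X$ is nonempty, closed, convex and contained in $\operatorname{dom}A=\{x: Ax\ne\varnothing\}$ and, with $P_X$ the metric projection onto $X$, $$\langle v-u,\,y-P_X(y)\rangle\ \ge\ \sigma\|y-P_X(y)\|^2\qquad\text{for all } y\in H,\ v\in Ay,\ u\in A(P_X(y)).$$ Put $$\mathcal P:=\operatorname{zer}(A_1+A_2)=\{x: 0\in A_1x+A_2x\},\qquad \mathcal D:=\operatorname{zer}\bigl(A_1^{-1}-A_2^{-1}\circ(-\mathrm{Id})\bigr)=\{y: 0\in A_1^{-1}y-A_2^{-1}(-y)\}.$$ Suppose that $A_1$ or $A_2$ is $\mu$-strongly monotone relative to $\mathcal P$, and that $A_1^{-1}$ is $\rho$-strongly monotone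 relative to $\mathcal D$ or $A_2^{-1}$ is $\rho$-strongly monotone relative to $-\mathcal D$. Write $J_{\gamma A}:=(\mathrm{Id}+\gamma A)^{-1}$ for the resolvent, which is single-valued with full domain when $A$ is maximally monotone and $\gamma>0$. Then for every $\gamma\in\Gamma$ the Douglas–Rachford operator $$T_\gamma:=\mathrm{Id}-J_{\gamma A_1}+J_{\gamma A_2}\circ(2J_{\gamma A_1}-\mathrm{Id})$$ is linearly regular with constant $\kappa_\gamma=4\bigl(1+\max\{\tfrac1{\gamma\mu},\tfrac{\gamma}{\rho}\}\bigr)$, i.e. the set $\operatorname{Fix}T_\gamma=\{x: T_\gamma x=x\}$ is nonempty and $\operatorname{dist}(x,\operatorname{Fix}T_\gamma)\le\kappa_\gamma\|x-T_\gamma x\|$ for all $x\in H$. Consequently, the family $(T_\gamma)_{\gamma\in\Gamma}$ is uniformly linearly regular: there exists $\kappa>0$ with $\operatorname{dist}(x,\operatorname{Fix}T_\gamma)\le\kappa\|x-T_\gamma x\|$ for all $x\in H$ and all $\gamma\in\Gamma$. -/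

import Mathlib

open scoped Pointwise RealInnerProductSpace

section Operators

variable {H : Type*} [NormedAddCommGroup H] [InnerProductSpace ℝ H]

/-- The graph of a set-valued operator. -/
def SVGraph (A : H → Set H) : Set (H × H) := {p | p.2 ∈ A p.1}

/-- The domain of a set-valued operator. -/
def SVDom (A : H → Set H) : Set H := {x | (A x).Nonempty}

/-- The zeros of a set-valued operator. -/
def SVZer (A : H → Set H) : Set H := {x | (0 : H) ∈ A x}

/-- The inverse of a set-valued operator. -/
def SVInv (A : H → Set H) : H → Set H := fun u => {x | u ∈ A x}

/-- A set-valued operator is monotone. -/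
def SVMonotone (A : H → Set H) : Prop :=
  ∀ ⦃x y u v : H⦄, u ∈ A x → v ∈ A y → 0 ≤ ⟪x - y, u - v⟫

/-- A set-valued operator is maximally monotone. -/
def MaxMonotone (A : H → Set H) : Prop :=
  SVMonotone A ∧
    ∀ B : H → Set H, SVMonotone B → SVGraph A ⊆ SVGraph B → SVGraph B = SVGraph A

/-- A set-valued operator is paramonotone. -/
def Paramonotone (A : H → Set H) : Prop :=
  SVMonotone A ∧
    ∀ ⦃x y u v : H⦄, u ∈ A x → v ∈ A y → ⟪x - y, u - v⟫ = 0 → v ∈ A x ∧ u ∈ A y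

/-- `p` is a metric projection of `y` onto the set `X`. If `X` is nonempty, closed and convex and
`H` is complete, then there is exactly one such `p` for every `y`. -/
def IsMetricProj (X : Set H) (y p : H) : Prop :=
  p ∈ X ∧ dist y p = Metric.infDist y X

/-- `A` is `μ`-strongly monotone relative to the nonempty closed convex set `X ⊆ dom A`. -/
structure RelStrongMono (A : H → Set H) (μ : ℝ) (X : Set H) : Prop where
  nonempty : X.Nonempty
  isClosed : IsClosed X
  convex : Convex ℝ X
  subset_dom : X ⊆ SVDom A
  le_inner : ∀ ⦃y v p u : H⦄, v ∈ A y → IsMetricProj X y p → u ∈ A p →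
    μ * ‖y - p‖ ^ 2 ≤ ⟪v - u, y - p⟫

/-- The set-valued resolvent `(Id + A)⁻¹`. -/
def SVResolvent (A : H → Set H) : H → Set H := SVInv fun p => {p} + A p

/-- The resolvent `J_A = (Id + A)⁻¹` as a single-valued map. For maximally monotone `A` the set
`SVResolvent A x` is always a singleton (`MaxMonotone.svResolvent_eq` below), and `resolventMap A x`
is its element. -/
noncomputable def resolventMap (A : H → Set H) (x : H) : H :=
  Classical.epsilon fun p => p ∈ SVResolvent A x

/-- The Douglas–Rachford operator `Id - J_{γA₁} + J_{γA₂} ∘ (2 J_{γA₁} - Id)`. -/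
noncomputable def douglasRachford (A₁ A₂ : H → Set H) (γ : ℝ) (x : H) : H :=
  x - resolventMap (fun z => γ • A₁ z) x +
    resolventMap (fun z => γ • A₂ z) ((2 : ℝ) • resolventMap (fun z => γ • A₁ z) x - x)

/-- `T` is linearly regular with constant `κ`. The fixed point set is required to be nonempty,
because `Metric.infDist` to the empty set is `0` rather than `+∞`. -/
def LinearlyRegular (T : H → H) (κ : ℝ) : Prop :=
  (Function.fixedPoints T).Nonempty ∧
    ∀ x : H, Metric.infDist x (Function.fixedPoints T) ≤ κ * ‖x - T x‖

/-- The family `(T γ)`, `γ ∈ Γ`, is uniformly linearly regular. -/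
def UniformlyLinearlyRegular (Γ : Set ℝ) (T : ℝ → H → H) : Prop :=
  ∃ κ : ℝ, 0 < κ ∧ ∀ γ ∈ Γ, LinearlyRegular (T γ) κ

theorem mem_svResolvent {A : H → Set H} {x p : H} : p ∈ SVResolvent A x ↔ x - p ∈ A p := by
  simp only [SVResolvent, SVInv, Set.mem_ofPred_eq, Set.singleton_add, Set.mem_image]
  constructor
  · rintro ⟨u, hu, rfl⟩
    simpa using hu
  · intro h
    exact ⟨_, h, by abel⟩

/-- Finitely many balls with centres `c i` and radii `‖m i‖` have a common point if the centres are
no farther apart than the points `m i`. -/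
theorem exists_common_point {ι : Type*} [Fintype ι] [Nonempty ι] (c m : ι → H)
    (h : ∀ i j, ‖c i - c j‖ ^ 2 ≤ ‖m i - m j‖ ^ 2) : ∃ p : H, ∀ i, ‖p - c i‖ ≤ ‖m i‖ := by
  classical
  set g : (ι → ℝ) → ℝ := fun l =>
    ∑ i, l i * (‖c i‖ ^ 2 - ‖m i‖ ^ 2) - ‖∑ i, l i • c i‖ ^ 2 with hg
  have hgc : Continuous g := by fun_prop
  obtain ⟨l, hl, hmax⟩ := (isCompact_stdSimplex ℝ ι).exists_isMaxOn
    ⟨_, single_mem_stdSimplex ℝ (Classical.arbitrary ι)⟩ hgc.continuousOn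
  have key : ∀ d : ι → H, ∑ i, ∑ j, l i * l j * ‖d i - d j‖ ^ 2 =
      2 * (∑ i, l i * ‖d i‖ ^ 2) - 2 * ‖∑ i, l i • d i‖ ^ 2 := by
    intro d
    have e1 : ‖∑ i, l i • d i‖ ^ 2 = ∑ i, ∑ j, l i * l j * ⟪d i, d j⟫ := by
      rw [← real_inner_self_eq_norm_sq, sum_inner]
      refine Finset.sum_congr rfl fun i _ => ?_
      rw [inner_sum]
      refine Finset.sum_congr rfl fun j _ => ?_
      rw [real_inner_smul_left, real_inner_smul_right]; ring
    have e2 : ∀ i j, l i * l j * ‖d i - d j‖ ^ 2 =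
        l i * ‖d i‖ ^ 2 * l j + l i * (l j * ‖d j‖ ^ 2) - 2 * (l i * l j * ⟪d i, d j⟫) := by
      intro i j; rw [norm_sub_sq_real]; ring
    have e3 : ∑ i, ∑ j, l i * ‖d i‖ ^ 2 * l j = ∑ i, l i * ‖d i‖ ^ 2 := by
      simp_rw [← Finset.mul_sum, hl.2, mul_one]
    have e4 : ∑ i, ∑ j, l i * (l j * ‖d j‖ ^ 2) = ∑ i, l i * ‖d i‖ ^ 2 := by
      simp_rw [← Finset.mul_sum]
      rw [← Finset.sum_mul, hl.2, one_mul]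
    have e5 : ∑ i, ∑ j, 2 * (l i * l j * ⟪d i, d j⟫) = 2 * ‖∑ i, l i • d i‖ ^ 2 := by
      rw [e1]
      simp_rw [Finset.mul_sum]
    simp_rw [e2, Finset.sum_sub_distrib, Finset.sum_add_distrib]
    rw [e3, e4, e5]
    ring
  have hle : g l ≤ 0 := by
    have h1 := key c
    have h2 := key m
    have h3 : ∑ i, ∑ j, l i * l j * ‖c i - c j‖ ^ 2 ≤ ∑ i, ∑ j, l i * l j * ‖m i - m j‖ ^ 2 :=
      Finset.sum_le_sum fun i _ => Finset.sum_le_sum fun j _ =>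
        mul_le_mul_of_nonneg_left (h i j) (mul_nonneg (hl.1 i) (hl.1 j))
    have h4 : g l = ∑ i, l i * ‖c i‖ ^ 2 - ∑ i, l i * ‖m i‖ ^ 2 - ‖∑ i, l i • c i‖ ^ 2 := by
      simp [hg, mul_sub, Finset.sum_sub_distrib]
    nlinarith [sq_nonneg ‖∑ i, l i • m i‖]
  refine ⟨∑ i, l i • c i, fun j => ?_⟩
  set p := ∑ i, l i • c i with hp
  set a := ‖c j‖ ^ 2 - ‖m j‖ ^ 2 with ha
  set s := ∑ i, l i * (‖c i‖ ^ 2 - ‖m i‖ ^ 2) with hs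
  have hgl : g l = s - ‖p‖ ^ 2 := rfl
  have hstep : ∀ t : ℝ, 0 < t → t ≤ 1 → a - s - 2 * ⟪p, c j - p⟫ ≤ t * ‖c j - p‖ ^ 2 := by
    intro t ht ht1
    have hmem : (1 - t) • l + t • (Pi.single j 1 : ι → ℝ) ∈ stdSimplex ℝ ι :=
      convex_stdSimplex ℝ ι hl (single_mem_stdSimplex ℝ j) (by linarith) ht.le (by ring)
    have h5 : g ((1 - t) • l + t • (Pi.single j 1 : ι → ℝ)) ≤ g l := hmax hmem
    have h6 : ∑ i, ((1 - t) • l + t • (Pi.single j 1 : ι → ℝ)) i * (‖c i‖ ^ 2 - ‖m i‖ ^ 2) =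
        (1 - t) * s + t * a := by
      simp only [Pi.add_apply, Pi.smul_apply, smul_eq_mul, add_mul, Finset.sum_add_distrib,
        mul_assoc, ← Finset.mul_sum, ← hs]
      simp [Pi.single_apply, ha]
    have h7 : ∑ i, ((1 - t) • l + t • (Pi.single j 1 : ι → ℝ)) i • c i = p + t • (c j - p) := by
      simp only [Pi.add_apply, Pi.smul_apply, smul_eq_mul, add_smul, Finset.sum_add_distrib,
        mul_smul, ← Finset.smul_sum, ← hp]
      simp [Pi.single_apply, smul_sub, sub_smul]
      abel
    have h8 : g ((1 - t) • l + t • (Pi.single j 1 : ι → ℝ)) =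
        (1 - t) * s + t * a - ‖p + t • (c j - p)‖ ^ 2 := by
      simp only [hg, h6, h7]
    rw [h8, hgl, norm_add_sq_real, real_inner_smul_right, norm_smul, mul_pow, Real.norm_eq_abs,
      sq_abs] at h5
    have h9 : t * (a - s - 2 * ⟪p, c j - p⟫) ≤ t * (t * ‖c j - p‖ ^ 2) := by nlinarith
    exact le_of_mul_le_mul_left h9 ht
  have hlim : a - s - 2 * ⟪p, c j - p⟫ ≤ 0 := by
    by_contra! hpos
    set e := a - s - 2 * ⟪p, c j - p⟫ with he
    have hN : 0 ≤ ‖c j - p‖ ^ 2 := sq_nonneg _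
    set N := ‖c j - p‖ ^ 2
    have h10 := hstep (min 1 (e / (2 * (N + 1)))) (by positivity) (min_le_left _ _)
    have h11 : min 1 (e / (2 * (N + 1))) * N ≤ e / (2 * (N + 1)) * N :=
      mul_le_mul_of_nonneg_right (min_le_right _ _) hN
    have h12 : e / (2 * (N + 1)) * N < e := by
      rw [div_mul_eq_mul_div, div_lt_iff₀ (by positivity)]
      nlinarith
    linarith
  have hfin : ‖p - c j‖ ^ 2 ≤ ‖m j‖ ^ 2 := by
    rw [norm_sub_sq_real]
    rw [inner_sub_right, real_inner_self_eq_norm_sq] at hlim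
    rw [hgl] at hle
    simp only [ha] at hlim
    linarith
  exact le_of_sq_le_sq hfin (norm_nonneg _)

/-- The resolvent of a maximally monotone operator is single-valued with full domain. -/
theorem MaxMonotone.existsUnique_svResolvent [CompleteSpace H] {A : H → Set H}
    (hA : MaxMonotone A) (x : H) : ∃! p, p ∈ SVResolvent A x := by
  classical
  simp only [mem_svResolvent]
  refine existsUnique_of_exists_of_unique ?_ ?_
  swap
  · intro p q hp hq
    have h := hA.1 hp hq
    have h1 : x - p - (x - q) = -(p - q) := by abel
    rw [h1, inner_neg_right, real_inner_self_eq_norm_sq] at h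
    have h2 : ‖p - q‖ = 0 := by nlinarith [norm_nonneg (p - q)]
    exact sub_eq_zero.1 (norm_eq_zero.1 h2)
  -- it suffices to find a point that is monotonically related to the whole graph
  suffices hp : ∃ p : H, ∀ y v, v ∈ A y → 0 ≤ ⟪p - y, x - p - v⟫ by
    obtain ⟨p, hp⟩ := hp
    have h := hA.2 (fun y => {v | v ∈ A y ∨ (y = p ∧ v = x - p)}) ?_ (fun z hz => Or.inl hz)
    · have h1 : (p, x - p) ∈ SVGraph A := by
        rw [← h]; exact Or.inr ⟨rfl, rfl⟩
      exact ⟨p, h1⟩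
    · rintro y z u v (hu | ⟨rfl, rfl⟩) (hv | ⟨rfl, rfl⟩)
      · exact hA.1 hu hv
      · rw [← neg_sub z y, ← neg_sub _ u, inner_neg_neg]
        exact hp _ _ hu
      · exact hp _ _ hv
      · simp
  let c : SVGraph A → H := fun i => (2⁻¹ : ℝ) • (i.1.1 + x - i.1.2)
  let m : SVGraph A → H := fun i => (2⁻¹ : ℝ) • (i.1.1 - x + i.1.2)
  have hcm : ∀ i j : SVGraph A, ‖c i - c j‖ ^ 2 ≤ ‖m i - m j‖ ^ 2 := by
    intro i j
    have h := hA.1 i.2 j.2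
    have e1 : c i - c j = (2⁻¹ : ℝ) • ((i.1.1 - j.1.1) - (i.1.2 - j.1.2)) := by
      simp only [c]; module
    have e2 : m i - m j = (2⁻¹ : ℝ) • ((i.1.1 - j.1.1) + (i.1.2 - j.1.2)) := by
      simp only [m]; module
    rw [e1, e2, norm_smul, norm_smul, mul_pow, mul_pow, norm_sub_sq_real, norm_add_sq_real]
    norm_num
    linarith
  have hball : ∀ (i : SVGraph A) (p : H), ‖p - c i‖ ≤ ‖m i‖ → 0 ≤ ⟪p - i.1.1, x - p - i.1.2⟫ := by
    intro i p h
    have e1 : p - i.1.1 = (p - c i) - m i := by simp only [c, m]; module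
    have e2 : x - p - i.1.2 = -((p - c i) + m i) := by simp only [c, m]; module
    rw [e1, e2, inner_neg_right, inner_sub_left, inner_add_right, inner_add_right,
      real_inner_self_eq_norm_sq, real_inner_self_eq_norm_sq, real_inner_comm (p - c i) (m i)]
    have := pow_le_pow_left₀ (norm_nonneg _) h 2
    linarith
  obtain ⟨i₀⟩ : Nonempty (SVGraph A) := by
    by_contra hne
    have hemp : ∀ y v, v ∉ A y := fun y v hv => hne ⟨⟨(y, v), hv⟩⟩
    have h := hA.2 (fun y => {v | y = 0 ∧ v = 0}) ?_ (fun z hz => (hemp _ _ hz).elim)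
    · have h1 : ((0 : H), (0 : H)) ∈ SVGraph A := by rw [← h]; exact ⟨rfl, rfl⟩
      exact hemp _ _ h1
    · rintro y z u v ⟨rfl, rfl⟩ ⟨rfl, rfl⟩
      simp
  let φ := InnerProductSpace.toDual ℝ H
  let t : SVGraph A → Set (WeakDual ℝ H) := fun i =>
    WeakDual.toStrongDual ⁻¹' Metric.closedBall (φ (c i)) ‖m i‖
  obtain ⟨f, -, hf⟩ := (WeakDual.isCompact_closedBall (φ (c i₀)) ‖m i₀‖).inter_iInter_nonempty t
    (fun i => WeakDual.isClosed_closedBall _ _) (by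
      intro u
      have : Nonempty ↥(insert i₀ u) := ⟨⟨i₀, Finset.mem_insert_self _ _⟩⟩
      obtain ⟨p, hp⟩ := exists_common_point (ι := ↥(insert i₀ u)) (fun i => c i) (fun i => m i)
        (fun i j => hcm i j)
      have hmem : ∀ i ∈ insert i₀ u, StrongDual.toWeakDual (φ p) ∈ t i := by
        intro i hi
        have h1 := hp ⟨i, hi⟩
        change φ p ∈ Metric.closedBall (φ (c i)) ‖m i‖
        rw [Metric.mem_closedBall, LinearIsometryEquiv.dist_map, dist_eq_norm]
        exact h1
      refine ⟨StrongDual.toWeakDual (φ p), hmem i₀ (Finset.mem_insert_self _ _), ?_⟩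
      simp only [Set.mem_iInter]
      exact fun i hi => hmem i (Finset.mem_insert_of_mem hi))
  refine ⟨φ.symm (WeakDual.toStrongDual f), fun y v hv => hball ⟨(y, v), hv⟩ _ ?_⟩
  have h1 := Set.mem_iInter.1 hf ⟨(y, v), hv⟩
  have h2 : WeakDual.toStrongDual f ∈ Metric.closedBall (φ (c ⟨(y, v), hv⟩)) ‖m ⟨(y, v), hv⟩‖ := h1
  rw [← φ.apply_symm_apply (WeakDual.toStrongDual f), Metric.mem_closedBall,
    LinearIsometryEquiv.dist_map, dist_eq_norm] at h2
  exact h2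

/-- For maximally monotone `A`, `resolventMap A` is the set-valued resolvent `(Id + A)⁻¹`. -/
theorem MaxMonotone.svResolvent_eq [CompleteSpace H] {A : H → Set H}
    (hA : MaxMonotone A) (x : H) : SVResolvent A x = {resolventMap A x} := by
  have h := hA.existsUnique_svResolvent x
  have h1 : resolventMap A x ∈ SVResolvent A x := Classical.epsilon_spec h.exists
  ext p
  rw [Set.mem_singleton_iff]
  exact ⟨fun hp => h.unique hp h1, fun hp => hp ▸ h1⟩

end Operators

section DouglasRachfordRegularity

open scoped Pointwise RealInnerProductSpace

variable {H : Type*} [NormedAddCommGroup H] [InnerProductSpace ℝ H]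

theorem SVMonotone.smul {A : H → Set H} (hA : SVMonotone A) {γ : ℝ} (hγ : 0 ≤ γ) :
    SVMonotone fun z => γ • A z := by
  rintro x y _ _ ⟨u, hu, rfl⟩ ⟨v, hv, rfl⟩
  change 0 ≤ ⟪x - y, γ • u - γ • v⟫
  rw [← smul_sub, real_inner_smul_right]
  exact mul_nonneg hγ (hA hu hv)

theorem MaxMonotone.smul {A : H → Set H} (hA : MaxMonotone A) {γ : ℝ} (hγ : 0 < γ) :
    MaxMonotone fun z => γ • A z := by
  refine ⟨hA.1.smul hγ.le, fun B hB hAB => (hAB.antisymm ?_).symm⟩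
  have h := hA.2 (fun z => γ⁻¹ • B z) (hB.smul (inv_nonneg.2 hγ.le)) (by
    rintro ⟨x, u⟩ hu
    have h1 : (x, γ • u) ∈ SVGraph B := hAB (Set.smul_mem_smul_set hu)
    exact (Set.mem_inv_smul_set_iff₀ hγ.ne' _ _).2 h1)
  rintro ⟨x, u⟩ hu
  have h1 : (x, γ⁻¹ • u) ∈ SVGraph A := by
    rw [← h]
    exact Set.smul_mem_smul_set hu
  exact (Set.mem_smul_set_iff_inv_smul_mem₀ hγ.ne' _ _).2 h1

theorem MaxMonotone.sub_resolventMap_mem [CompleteSpace H] {A : H → Set H} (hA : MaxMonotone A)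
    (x : H) : x - resolventMap A x ∈ A (resolventMap A x) := by
  rw [← mem_svResolvent, hA.svResolvent_eq]
  exact Set.mem_singleton _

theorem MaxMonotone.resolventMap_add [CompleteSpace H] {A : H → Set H} (hA : MaxMonotone A)
    {x u : H} (hu : u ∈ A x) : resolventMap A (x + u) = x := by
  have h : x ∈ SVResolvent A (x + u) := mem_svResolvent.2 (by simpa using hu)
  rw [hA.svResolvent_eq] at h
  exact (Set.mem_singleton_iff.1 h).symm

/-- Primal and dual solutions of a sum of paramonotone operators can be paired arbitrarily. -/
theorem Paramonotone.mem_of_mem_zer {A₁ A₂ : H → Set H} (h₁ : Paramonotone A₁)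
    (h₂ : Paramonotone A₂) {x y : H} (hx : x ∈ SVZer fun x => A₁ x + A₂ x)
    (hy : y ∈ SVZer fun y => SVInv A₁ y - SVInv A₂ (-y)) : y ∈ A₁ x ∧ -y ∈ A₂ x := by
  obtain ⟨u, hu, v, hv, huv⟩ := hx
  obtain ⟨z, hz, z', hz', hzz⟩ := hy
  obtain rfl : v = -u := (neg_eq_of_add_eq_zero_right huv).symm
  obtain rfl : z = z' := sub_eq_zero.1 hzz
  have e : -u - -y = -(u - y) := by abel
  have i₁ := h₁.1 hu hz
  have i₂ := h₂.1 hv hz'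
  rw [e, inner_neg_right] at i₂
  have h0 : ⟪x - z, u - y⟫ = 0 := by linarith
  exact ⟨(h₁.2 hu hz h0).1, (h₂.2 hv hz' (by rw [e, inner_neg_right, h0, neg_zero])).1⟩

theorem douglasRachford_add_smul [CompleteSpace H] {A₁ A₂ : H → Set H} (h₁ : MaxMonotone A₁)
    (h₂ : MaxMonotone A₂) {γ : ℝ} (hγ : 0 < γ) {x y : H} (hy₁ : y ∈ A₁ x) (hy₂ : -y ∈ A₂ x) :
    douglasRachford A₁ A₂ γ (x + γ • y) = x + γ • y := by
  have e : (2 : ℝ) • x - (x + γ • y) = x + γ • -y := by module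
  rw [douglasRachford, (h₁.smul hγ).resolventMap_add (Set.smul_mem_smul_set hy₁), e,
    (h₂.smul hγ).resolventMap_add (Set.smul_mem_smul_set hy₂)]
  abel

theorem exists_isMetricProj [CompleteSpace H] {X : Set H} (hne : X.Nonempty) (hcl : IsClosed X)
    (hconv : Convex ℝ X) (y : H) : ∃ p, IsMetricProj X y p := by
  obtain ⟨p, hp, h⟩ := exists_norm_eq_iInf_of_complete_convex hne hcl.isComplete hconv y
  refine ⟨p, hp, ?_⟩
  rw [Metric.infDist_eq_iInf, dist_eq_norm, h]
  simp_rw [dist_eq_norm]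

theorem RelStrongMono.exists_isMetricProj [CompleteSpace H] {A : H → Set H} {μ : ℝ} {X : Set H}
    (hA : RelStrongMono A μ X) (y : H) : ∃ p, IsMetricProj X y p :=
  _root_.exists_isMetricProj hA.nonempty hA.isClosed hA.convex y

/-- The norm estimate behind linear regularity of the Douglas–Rachford operator. -/
theorem norm_le_of_sq_norm_le_inner {E G r : H} {c s : ℝ} (hc : 0 ≤ c) (hs : 0 ≤ s) (hs2 : s ≤ 2)
    (hE : ‖E‖ ^ 2 ≤ c * (⟪r, E + G⟫ + (s - 1) * ‖r‖ ^ 2))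
    (hG : ‖G‖ ^ 2 ≤ c * (⟪r, E + G⟫ + (s - 1) * ‖r‖ ^ 2)) :
    ‖E + G + s • r‖ ≤ 4 * (1 + c) * ‖r‖ := by
  have hr := norm_nonneg r
  have hN := norm_nonneg (E + G)
  have hsum : ‖E + G‖ ^ 2 ≤ 2 * (‖E‖ ^ 2 + ‖G‖ ^ 2) := by
    have := parallelogram_law_with_norm ℝ E G
    nlinarith [sq_nonneg ‖E - G‖]
  have hQ : c * (⟪r, E + G⟫ + (s - 1) * ‖r‖ ^ 2) ≤ c * (‖r‖ * ‖E + G‖ + ‖r‖ ^ 2) := by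
    refine mul_le_mul_of_nonneg_left (add_le_add (real_inner_le_norm _ _) ?_) hc
    nlinarith [sq_nonneg ‖r‖]
  have hle : ‖E + G‖ ≤ (4 * c + 2) * ‖r‖ := by
    by_contra! hlt
    have h1 : ‖E + G‖ * (‖E + G‖ - 4 * c * ‖r‖) ≤ 4 * c * ‖r‖ ^ 2 := by nlinarith
    have h2 : 2 * ‖r‖ ≤ ‖E + G‖ - 4 * c * ‖r‖ := by linarith
    have h3 := mul_le_mul_of_nonneg_left h2 hN
    have hcr : 0 ≤ c * ‖r‖ ^ 2 := by positivity
    rcases hr.eq_or_lt with h0 | hpos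
    · rw [← h0] at h1 hlt
      nlinarith
    · nlinarith [mul_lt_mul_of_pos_right hlt hpos, pow_pos hpos 2]
  calc ‖E + G + s • r‖ ≤ ‖E + G‖ + ‖s • r‖ := norm_add_le _ _
    _ = ‖E + G‖ + s * ‖r‖ := by rw [norm_smul, Real.norm_of_nonneg hs]
    _ ≤ 4 * (1 + c) * ‖r‖ := by nlinarith

theorem LinearlyRegular.mono {T : H → H} {κ κ' : ℝ} (hT : LinearlyRegular T κ) (h : κ ≤ κ') :
    LinearlyRegular T κ' :=
  ⟨hT.1, fun x => (hT.2 x).trans (mul_le_mul_of_nonneg_right h (norm_nonneg _))⟩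

/-- If `u ∈ A₁ p`, `w ∈ A₂ q` and one of the operators is strongly monotone relative to the primal
solutions, then the distance of `p` or of `q` to some primal solution is controlled. -/
theorem exists_primal_estimate [CompleteSpace H] {A₁ A₂ : H → Set H} {P D : Set H} {μ : ℝ}
    (h₁ : SVMonotone A₁) (h₂ : SVMonotone A₂)
    (hPD : ∀ x ∈ P, ∀ y ∈ D, y ∈ A₁ x ∧ -y ∈ A₂ x)
    (h : RelStrongMono A₁ μ P ∨ RelStrongMono A₂ μ P) {p q u w : H} (hu : u ∈ A₁ p)
    (hw : w ∈ A₂ q) :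
    ∃ x ∈ P, ∃ s : ℝ, 0 ≤ s ∧ s ≤ 1 ∧ ∀ y ∈ D,
      μ * ‖p - x - s • (p - q)‖ ^ 2 ≤ ⟪p - x, u - y⟫ + ⟪q - x, w + y⟫ := by
  rcases h with h | h
  · obtain ⟨x, hx⟩ := h.exists_isMetricProj p
    refine ⟨x, hx.1, 0, le_rfl, zero_le_one, fun y hy => ?_⟩
    have hxy := hPD x hx.1 y hy
    have i₁ := h.le_inner hu hx hxy.1
    have i₂ := h₂ hw hxy.2
    rw [real_inner_comm] at i₁
    rw [sub_neg_eq_add] at i₂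
    rw [zero_smul, sub_zero]
    linarith
  · obtain ⟨x, hx⟩ := h.exists_isMetricProj q
    refine ⟨x, hx.1, 1, zero_le_one, le_rfl, fun y hy => ?_⟩
    have hxy := hPD x hx.1 y hy
    have i₁ := h₁ hu hxy.1
    have i₂ := h.le_inner hw hx hxy.2
    rw [real_inner_comm, sub_neg_eq_add] at i₂
    have e : p - x - (1 : ℝ) • (p - q) = q - x := by module
    rw [e]
    linarith

/-- The dual counterpart of `exists_primal_estimate`. -/
theorem exists_dual_estimate [CompleteSpace H] {A₁ A₂ : H → Set H} {P D : Set H} {ρ : ℝ}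
    (h₁ : SVMonotone A₁) (h₂ : SVMonotone A₂)
    (hPD : ∀ x ∈ P, ∀ y ∈ D, y ∈ A₁ x ∧ -y ∈ A₂ x)
    (h : RelStrongMono (SVInv A₁) ρ D ∨ RelStrongMono (SVInv A₂) ρ (-D)) {p q u w : H}
    (hu : u ∈ A₁ p) (hw : w ∈ A₂ q) :
    ∃ y ∈ D, ∃ s : ℝ, 0 ≤ s ∧ s ≤ 1 ∧ ∀ x ∈ P,
      ρ * ‖u - y - s • (u + w)‖ ^ 2 ≤ ⟪p - x, u - y⟫ + ⟪q - x, w + y⟫ := by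
  rcases h with h | h
  · obtain ⟨y, hy⟩ := h.exists_isMetricProj u
    refine ⟨y, hy.1, 0, le_rfl, zero_le_one, fun x hx => ?_⟩
    have hxy := hPD x hx y hy.1
    have i₁ := h.le_inner (v := p) (u := x) hu hy hxy.1
    have i₂ := h₂ hw hxy.2
    rw [sub_neg_eq_add] at i₂
    rw [zero_smul, sub_zero]
    linarith
  · obtain ⟨y, hy⟩ := h.exists_isMetricProj w
    refine ⟨-y, hy.1, 1, zero_le_one, le_rfl, fun x hx => ?_⟩
    have hxy := hPD x hx (-y) hy.1
    have hyx : y ∈ A₂ x := by simpa using hxy.2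
    have i₁ := h₁ hu hxy.1
    have i₂ := h.le_inner (v := q) (u := x) hw hy hyx
    have e : u - -y - (1 : ℝ) • (u + w) = -(w - y) := by module
    rw [e, norm_neg, ← sub_eq_add_neg w y]
    linarith

theorem linearlyRegular_douglasRachford [CompleteSpace H] {A₁ A₂ : H → Set H} {P D : Set H}
    {μ ρ γ : ℝ} (h₁ : MaxMonotone A₁) (h₂ : MaxMonotone A₂) (hμ : 0 < μ) (hρ : 0 < ρ) (hγ : 0 < γ)
    (hPD : ∀ x ∈ P, ∀ y ∈ D, y ∈ A₁ x ∧ -y ∈ A₂ x)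
    (hprimal : RelStrongMono A₁ μ P ∨ RelStrongMono A₂ μ P)
    (hdual : RelStrongMono (SVInv A₁) ρ D ∨ RelStrongMono (SVInv A₂) ρ (-D)) :
    LinearlyRegular (douglasRachford A₁ A₂ γ) (4 * (1 + max (1 / (γ * μ)) (γ / ρ))) := by
  have hfix : ∀ x ∈ P, ∀ y ∈ D, x + γ • y ∈ Function.fixedPoints (douglasRachford A₁ A₂ γ) :=
    fun x hx y hy => douglasRachford_add_smul h₁ h₂ hγ (hPD x hx y hy).1 (hPD x hx y hy).2
  have key : ∀ z, ∃ x ∈ P, ∃ y ∈ D, dist z (x + γ • y) ≤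
      4 * (1 + max (1 / (γ * μ)) (γ / ρ)) * ‖z - douglasRachford A₁ A₂ γ z‖ := by
    intro z
    obtain ⟨u, hu, hpu⟩ := (h₁.smul hγ).sub_resolventMap_mem z
    obtain ⟨w, hw, hqw⟩ := (h₂.smul hγ).sub_resolventMap_mem
      ((2 : ℝ) • resolventMap (fun z => γ • A₁ z) z - z)
    have hT : z - douglasRachford A₁ A₂ γ z = resolventMap (fun z => γ • A₁ z) z -
        resolventMap (fun z => γ • A₂ z) ((2 : ℝ) • resolventMap (fun z => γ • A₁ z) z - z) := by
      rw [douglasRachford]; abel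
    rw [hT]
    set p := resolventMap (fun z => γ • A₁ z) z
    set q := resolventMap (fun z => γ • A₂ z) ((2 : ℝ) • p - z)
    obtain ⟨x, hx, s, hs, hs1, hE⟩ := exists_primal_estimate h₁.1 h₂.1 hPD hprimal hu hw
    obtain ⟨y, hy, t, ht, ht1, hG⟩ := exists_dual_estimate h₁.1 h₂.1 hPD hdual hu hw
    refine ⟨x, hx, y, hy, ?_⟩
    replace hE := hE y hy
    replace hG := hG x hx
    set S := ⟪p - x, u - y⟫ + ⟪q - x, w + y⟫ with hS
    have hpu' : γ • u = z - p := hpu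
    have hqw' : γ • w = (2 : ℝ) • p - z - q := hqw
    set r := p - q with hr
    have huw : γ • (u + w) = r := by
      rw [smul_add, hpu', hqw', hr]; module
    set E := p - x - s • r with hEdef
    set G := γ • (u - y) - t • r with hGdef
    have hγS : γ * S = ⟪r, E + G⟫ + (s + t - 1) * ‖r‖ ^ 2 := by
      have e₁ : γ • (w + y) = r - γ • (u - y) := by rw [← huw]; module
      have e₂ : q - x = (p - x) - r := by rw [hr]; abel
      have e₃ : E + G = (p - x) + γ • (u - y) - (s + t) • r := by rw [hEdef, hGdef]; module
      rw [hS, mul_add, ← real_inner_smul_right, ← real_inner_smul_right, e₁, e₂, e₃]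
      simp only [inner_sub_left, inner_sub_right, inner_add_right, real_inner_smul_right,
        ← real_inner_self_eq_norm_sq]
      simp only [real_inner_comm r]
      ring
    have hS0 : 0 ≤ γ * S := mul_nonneg hγ.le (le_trans (by positivity) hE)
    have hz : z - (x + γ • y) = E + G + (s + t) • r := by
      have hz' : z = p + γ • u := by rw [hpu']; abel
      rw [hEdef, hGdef, hz']; module
    rw [dist_eq_norm, hz]
    refine norm_le_of_sq_norm_le_inner (le_trans (by positivity) (le_max_left _ _))
      (add_nonneg hs ht) (by linarith) ?_ ?_
    · rw [← hγS]
      refine le_trans ?_ (mul_le_mul_of_nonneg_right (le_max_left _ _) hS0)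
      rw [one_div_mul_eq_div, le_div_iff₀ (by positivity)]
      linarith [mul_le_mul_of_nonneg_left hE hγ.le]
    · rw [← hγS]
      refine le_trans ?_ (mul_le_mul_of_nonneg_right (le_max_right _ _) hS0)
      have e : G = γ • (u - y - t • (u + w)) := by rw [hGdef, ← huw]; module
      rw [div_mul_eq_mul_div, le_div_iff₀ hρ, e, norm_smul, Real.norm_of_nonneg hγ.le]
      linarith [mul_le_mul_of_nonneg_left hG (mul_nonneg hγ.le hγ.le)]
  refine ⟨?_, fun z => ?_⟩
  · obtain ⟨x, hx, y, hy, -⟩ := key 0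
    exact ⟨_, hfix x hx y hy⟩
  · obtain ⟨x, hx, y, hy, h⟩ := key z
    exact (Metric.infDist_le_dist_of_mem (hfix x hx y hy)).trans h

end DouglasRachfordRegularity

theorem stmt11 {H : Type*} [NormedAddCommGroup H] [InnerProductSpace ℝ H] [CompleteSpace H]
    (a b : ℝ) (ha : 0 < a) (hab : a ≤ b)
    (A₁ A₂ : H → Set H) (h₁ : MaxMonotone A₁) (h₂ : MaxMonotone A₂)
    (hp₁ : Paramonotone A₁) (hp₂ : Paramonotone A₂)
    (μ ρ : ℝ) (hμ : 0 < μ) (hρ : 0 < ρ)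
    (P D : Set H)
    (hP : P = SVZer fun x => A₁ x + A₂ x)
    (hD : D = SVZer fun y => SVInv A₁ y - SVInv A₂ (-y))
    (hprimal : RelStrongMono A₁ μ P ∨ RelStrongMono A₂ μ P)
    (hdual : RelStrongMono (SVInv A₁) ρ D ∨ RelStrongMono (SVInv A₂) ρ (-D)) :
    (∀ γ ∈ Set.Icc a b,
      LinearlyRegular (douglasRachford A₁ A₂ γ) (4 * (1 + max (1 / (γ * μ)) (γ / ρ)))) ∧
    UniformlyLinearlyRegular (Set.Icc a b) (douglasRachford A₁ A₂) := by
  subst hP hD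
  have hreg : ∀ γ ∈ Set.Icc a b,
      LinearlyRegular (douglasRachford A₁ A₂ γ) (4 * (1 + max (1 / (γ * μ)) (γ / ρ))) :=
    fun γ hγ => linearlyRegular_douglasRachford h₁ h₂ hμ hρ (ha.trans_le hγ.1)
      (fun _ hx _ hy => hp₁.mem_of_mem_zer hp₂ hx hy) hprimal hdual
  refine ⟨hreg, 4 * (1 + max (1 / (a * μ)) (b / ρ)), by positivity, fun γ hγ => ?_⟩
  refine (hreg γ hγ).mono ?_
  have h1 : 1 / (γ * μ) ≤ 1 / (a * μ) :=
    one_div_le_one_div_of_le (by positivity) (mul_le_mul_of_nonneg_right hγ.1 hμ.le)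
  have h2 : γ / ρ ≤ b / ρ := div_le_div_of_nonneg_right hγ.2 hρ.le
  linarith [max_le_max h1 h2]
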